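/- Let A be a differential graded Poisson algebra over a field k. Then (A^{op})^e ≅ (A^e)^{op} as differential graded algebras, where A^{op} is the opposite differential graded Poisson algebra of A and (A^e)^{op} is the opposite differential graded algebra of A^e. -/

import Mathlib

open scoped TensorProduct

noncomputable section

namespace DGPaper

universe u

/-- A differential graded Lie algebra structure on a `k`-vector space `V`. -/
structure DGLAOn (k : Type u) [Field k] (V : Type u) [AddCommGroup V] [Module k V] where
  gr : ℤ → Submodule k V
  decomp : DirectSum.Decomposition gr
  br : V →ₗ[k] V →ₗ[k] V
  br_mem : ∀ {i j : ℤ} {a b : V}, a ∈ gr i → b ∈ gr j → br a b ∈ gr (i + j)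
  br_antisymm : ∀ {i j : ℤ} {a b : V}, a ∈ gr i → b ∈ gr j →
    br a b = -(((-1 : k) ^ (i * j)) • br b a)
  br_jacobi : ∀ {i j l : ℤ} {a b c : V}, a ∈ gr i → b ∈ gr j → c ∈ gr l →
    br a (br b c) = br (br a b) c + ((-1 : k) ^ (i * j)) • br b (br a c)
  d : V →ₗ[k] V
  d_mem : ∀ {i : ℤ} {a : V}, a ∈ gr i → d a ∈ gr (i + 1)
  d_sq : ∀ a : V, d (d a) = 0
  d_br : ∀ {i j : ℤ} {a b : V}, a ∈ gr i → b ∈ gr j →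
    d (br a b) = br (d a) b + ((-1 : k) ^ i) • br a (d b)

/-- A differential graded (associative, unital) algebra structure on a `k`-vector space `N`. -/
structure DGAOn (k : Type u) [Field k] (N : Type u) [AddCommGroup N] [Module k N] where
  gr : ℤ → Submodule k N
  decomp : DirectSum.Decomposition gr
  mul : N →ₗ[k] N →ₗ[k] N
  one : N
  one_mem : one ∈ gr 0
  mul_mem : ∀ {i j : ℤ} {a b : N}, a ∈ gr i → b ∈ gr j → mul a b ∈ gr (i + j)
  mul_assoc : ∀ a b c : N, mul (mul a b) c = mul a (mul b c)
  one_mul : ∀ a : N, mul one a = a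
  mul_one : ∀ a : N, mul a one = a
  d : N →ₗ[k] N
  d_mem : ∀ {i : ℤ} {a : N}, a ∈ gr i → d a ∈ gr (i + 1)
  d_sq : ∀ a : N, d (d a) = 0
  d_mul : ∀ {i j : ℤ} {a b : N}, a ∈ gr i → b ∈ gr j →
    d (mul a b) = mul (d a) b + ((-1 : k) ^ i) • mul a (d b)

/-- A differential graded Poisson algebra structure on a `k`-vector space `M`. -/
structure DGPAOn (k : Type u) [Field k] (M : Type u) [AddCommGroup M] [Module k M] where
  gr : ℤ → Submodule k M
  decomp : DirectSum.Decomposition gr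
  mul : M →ₗ[k] M →ₗ[k] M
  one : M
  one_mem : one ∈ gr 0
  mul_mem : ∀ {i j : ℤ} {a b : M}, a ∈ gr i → b ∈ gr j → mul a b ∈ gr (i + j)
  mul_assoc : ∀ a b c : M, mul (mul a b) c = mul a (mul b c)
  one_mul : ∀ a : M, mul one a = a
  mul_one : ∀ a : M, mul a one = a
  mul_comm : ∀ {i j : ℤ} {a b : M}, a ∈ gr i → b ∈ gr j →
    mul a b = ((-1 : k) ^ (i * j)) • mul b a
  br : M →ₗ[k] M →ₗ[k] M
  br_mem : ∀ {i j : ℤ} {a b : M}, a ∈ gr i → b ∈ gr j → br a b ∈ gr (i + j)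
  br_antisymm : ∀ {i j : ℤ} {a b : M}, a ∈ gr i → b ∈ gr j →
    br a b = -(((-1 : k) ^ (i * j)) • br b a)
  br_jacobi : ∀ {i j l : ℤ} {a b c : M}, a ∈ gr i → b ∈ gr j → c ∈ gr l →
    br a (br b c) = br (br a b) c + ((-1 : k) ^ (i * j)) • br b (br a c)
  br_deriv : ∀ {i j l : ℤ} {a b c : M}, a ∈ gr i → b ∈ gr j → c ∈ gr l →
    br a (mul b c) = mul (br a b) c + ((-1 : k) ^ (i * j)) • mul b (br a c)
  d : M →ₗ[k] M
  d_mem : ∀ {i : ℤ} {a : M}, a ∈ gr i → d a ∈ gr (i + 1)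
  d_sq : ∀ a : M, d (d a) = 0
  d_br : ∀ {i j : ℤ} {a b : M}, a ∈ gr i → b ∈ gr j →
    d (br a b) = br (d a) b + ((-1 : k) ^ i) • br a (d b)
  d_mul : ∀ {i j : ℤ} {a b : M}, a ∈ gr i → b ∈ gr j →
    d (mul a b) = mul (d a) b + ((-1 : k) ^ i) • mul a (d b)

section Defs

variable {k : Type u} [Field k]

/-- The differential graded Lie algebra underlying a differential graded Poisson algebra. -/
def DGPAOn.toLie {M : Type u} [AddCommGroup M] [Module k M] (P : DGPAOn k M) :
    DGLAOn k M where
  gr := P.gr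
  decomp := P.decomp
  br := P.br
  br_mem := P.br_mem
  br_antisymm := P.br_antisymm
  br_jacobi := P.br_jacobi
  d := P.d
  d_mem := P.d_mem
  d_sq := P.d_sq
  d_br := P.d_br

section Maps

variable {M N : Type u} [AddCommGroup M] [Module k M] [AddCommGroup N] [Module k N]

/-- A morphism of differential graded algebras (degree-0, multiplicative, unital,
commuting with the differentials). -/
def IsDGAHom (E : DGAOn k M) (F : DGAOn k N) (f : M →ₗ[k] N) : Prop :=
  (∀ {n : ℤ} {x : M}, x ∈ E.gr n → f x ∈ F.gr n) ∧
  (∀ x y : M, f (E.mul x y) = F.mul (f x) (f y)) ∧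
  f E.one = F.one ∧
  ∀ x : M, f (E.d x) = F.d (f x)

/-- A morphism of differential graded Poisson algebras. -/
def IsDGPAHom (P : DGPAOn k M) (Q : DGPAOn k N) (f : M →ₗ[k] N) : Prop :=
  (∀ {n : ℤ} {x : M}, x ∈ P.gr n → f x ∈ Q.gr n) ∧
  (∀ x y : M, f (P.mul x y) = Q.mul (f x) (f y)) ∧
  f P.one = Q.one ∧
  (∀ x : M, f (P.d x) = Q.d (f x)) ∧
  ∀ x y : M, f (P.br x y) = Q.br (f x) (f y)

end Maps

section Tensor

variable {A B : Type u} [AddCommGroup A] [Module k A] [AddCommGroup B] [Module k B]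

/-- `R` is the tensor product differential graded Poisson algebra structure on `A ⊗[k] B`
induced by `P` and `Q`. -/
def IsTensorDGPA (P : DGPAOn k A) (Q : DGPAOn k B) (R : DGPAOn k (A ⊗[k] B)) : Prop :=
  (∀ n : ℤ, R.gr n = Submodule.span k {z : A ⊗[k] B |
      ∃ (i j : ℤ) (a : A) (b : B), i + j = n ∧ a ∈ P.gr i ∧ b ∈ Q.gr j ∧ z = a ⊗ₜ[k] b}) ∧
  R.one = P.one ⊗ₜ[k] Q.one ∧
  (∀ {i j i' j' : ℤ} {a a' : A} {b b' : B},
      a ∈ P.gr i → b ∈ Q.gr j → a' ∈ P.gr i' → b' ∈ Q.gr j' →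
    R.mul (a ⊗ₜ[k] b) (a' ⊗ₜ[k] b') = ((-1 : k) ^ (i' * j)) • (P.mul a a' ⊗ₜ[k] Q.mul b b')) ∧
  (∀ {i j : ℤ} {a : A} {b : B}, a ∈ P.gr i → b ∈ Q.gr j →
    R.d (a ⊗ₜ[k] b) = P.d a ⊗ₜ[k] b + ((-1 : k) ^ i) • (a ⊗ₜ[k] Q.d b)) ∧
  (∀ {i j i' j' : ℤ} {a a' : A} {b b' : B},
      a ∈ P.gr i → b ∈ Q.gr j → a' ∈ P.gr i' → b' ∈ Q.gr j' →
    R.br (a ⊗ₜ[k] b) (a' ⊗ₜ[k] b') =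
      ((-1 : k) ^ (i' * j)) • (P.br a a' ⊗ₜ[k] Q.mul b b' + P.mul a a' ⊗ₜ[k] Q.br b b'))

/-- `G` is the tensor product differential graded algebra structure on `A ⊗[k] B`
induced by `E` and `F` (with the Koszul sign rule). -/
def IsTensorDGA (E : DGAOn k A) (F : DGAOn k B) (G : DGAOn k (A ⊗[k] B)) : Prop :=
  (∀ n : ℤ, G.gr n = Submodule.span k {z : A ⊗[k] B |
      ∃ (i j : ℤ) (x : A) (y : B), i + j = n ∧ x ∈ E.gr i ∧ y ∈ F.gr j ∧ z = x ⊗ₜ[k] y}) ∧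
  G.one = E.one ⊗ₜ[k] F.one ∧
  (∀ {i j i' j' : ℤ} {x x' : A} {y y' : B},
      x ∈ E.gr i → y ∈ F.gr j → x' ∈ E.gr i' → y' ∈ F.gr j' →
    G.mul (x ⊗ₜ[k] y) (x' ⊗ₜ[k] y') = ((-1 : k) ^ (i' * j)) • (E.mul x x' ⊗ₜ[k] F.mul y y')) ∧
  (∀ {i j : ℤ} {x : A} {y : B}, x ∈ E.gr i → y ∈ F.gr j →
    G.d (x ⊗ₜ[k] y) = E.d x ⊗ₜ[k] y + ((-1 : k) ^ i) • (x ⊗ₜ[k] F.d y))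

end Tensor

section Env

variable {M : Type u} [AddCommGroup M] [Module k M]

/-- The defining relations of the universal enveloping algebra `A^e` of a differential
graded Poisson algebra, imposed on the tensor algebra of `M × M`; the first copy of `M`
gives the generators `m_a`, the second copy the generators `h_a`. -/
inductive EnvRel (P : DGPAOn k M) :
    TensorAlgebra k (M × M) → TensorAlgebra k (M × M) → Prop
  | relone : EnvRel P (TensorAlgebra.ι k ((P.one, 0) : M × M)) 1
  | relmul (a b : M) :
      EnvRel P (TensorAlgebra.ι k ((P.mul a b, 0) : M × M))
        (TensorAlgebra.ι k ((a, 0) : M × M) * TensorAlgebra.ι k ((b, 0) : M × M))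
  | relhmul {i j : ℤ} {a b : M} (ha : a ∈ P.gr i) (hb : b ∈ P.gr j) :
      EnvRel P (TensorAlgebra.ι k ((0, P.mul a b) : M × M))
        (TensorAlgebra.ι k ((a, 0) : M × M) * TensorAlgebra.ι k ((0, b) : M × M) +
          ((-1 : k) ^ (i * j)) •
            (TensorAlgebra.ι k ((b, 0) : M × M) * TensorAlgebra.ι k ((0, a) : M × M)))
  | relmbr {i j : ℤ} {a b : M} (ha : a ∈ P.gr i) (hb : b ∈ P.gr j) :
      EnvRel P (TensorAlgebra.ι k ((P.br a b, 0) : M × M))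
        (TensorAlgebra.ι k ((0, a) : M × M) * TensorAlgebra.ι k ((b, 0) : M × M) -
          ((-1 : k) ^ (i * j)) •
            (TensorAlgebra.ι k ((b, 0) : M × M) * TensorAlgebra.ι k ((0, a) : M × M)))
  | relhbr {i j : ℤ} {a b : M} (ha : a ∈ P.gr i) (hb : b ∈ P.gr j) :
      EnvRel P (TensorAlgebra.ι k ((0, P.br a b) : M × M))
        (TensorAlgebra.ι k ((0, a) : M × M) * TensorAlgebra.ι k ((0, b) : M × M) -
          ((-1 : k) ^ (i * j)) •
            (TensorAlgebra.ι k ((0, b) : M × M) * TensorAlgebra.ι k ((0, a) : M × M)))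

/-- The universal enveloping algebra `A^e` of a differential graded Poisson algebra,
as a quotient of the tensor algebra on two copies of `A`. -/
abbrev Env (P : DGPAOn k M) : Type u := RingQuot (EnvRel P)

/-- The generators `m_a` of `A^e`. -/
def mgen (P : DGPAOn k M) : M →ₗ[k] Env P :=
  (RingQuot.mkAlgHom k (EnvRel P)).toLinearMap ∘ₗ
    ((TensorAlgebra.ι k : (M × M) →ₗ[k] TensorAlgebra k (M × M)) ∘ₗ LinearMap.inl k M M)

/-- The generators `h_a` of `A^e`. -/
def hgen (P : DGPAOn k M) : M →ₗ[k] Env P :=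
  (RingQuot.mkAlgHom k (EnvRel P)).toLinearMap ∘ₗ
    ((TensorAlgebra.ι k : (M × M) →ₗ[k] TensorAlgebra k (M × M)) ∘ₗ LinearMap.inr k M M)

/-- `E` is the differential graded algebra structure on `A^e`, with the ring
multiplication of `A^e`, grading `|m_a| = |h_a| = |a|` and differential determined by
`∂(m_a) = m_{d a}`, `∂(h_a) = h_{d a}` and the graded Leibniz rule. -/
def IsEnvDGA (P : DGPAOn k M) (E : DGAOn k (Env P)) : Prop :=
  (∀ x y : Env P, E.mul x y = x * y) ∧
  E.one = 1 ∧
  (∀ {i : ℤ} {a : M}, a ∈ P.gr i → mgen P a ∈ E.gr i) ∧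
  (∀ {i : ℤ} {a : M}, a ∈ P.gr i → hgen P a ∈ E.gr i) ∧
  (∀ a : M, E.d (mgen P a) = mgen P (P.d a)) ∧
  (∀ a : M, E.d (hgen P a) = hgen P (P.d a))

end Env

section Lie

variable {V : Type u} [AddCommGroup V] [Module k V]

/-- The defining relations of the universal enveloping algebra of a differential graded
Lie algebra. -/
inductive LieRel (L : DGLAOn k V) : TensorAlgebra k V → TensorAlgebra k V → Prop
  | rel {i j : ℤ} {a b : V} (ha : a ∈ L.gr i) (hb : b ∈ L.gr j) :
      LieRel L
        (TensorAlgebra.ι k a * TensorAlgebra.ι k b -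
          ((-1 : k) ^ (i * j)) • (TensorAlgebra.ι k b * TensorAlgebra.ι k a))
        (TensorAlgebra.ι k (L.br a b))

/-- The universal enveloping algebra `U(L)` of a differential graded Lie algebra `L`. -/
abbrev ULie (L : DGLAOn k V) : Type u := RingQuot (LieRel L)

/-- The canonical map `L → U(L)`. -/
def uGen (L : DGLAOn k V) : V →ₗ[k] ULie L :=
  (RingQuot.mkAlgHom k (LieRel L)).toLinearMap ∘ₗ TensorAlgebra.ι k

/-- `E` is the differential graded algebra structure of `U(L)`. -/
def IsULieDGA (L : DGLAOn k V) (E : DGAOn k (ULie L)) : Prop :=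
  (∀ x y : ULie L, E.mul x y = x * y) ∧
  E.one = 1 ∧
  (∀ {i : ℤ} {a : V}, a ∈ L.gr i → uGen L a ∈ E.gr i) ∧
  (∀ a : V, E.d (uGen L a) = uGen L (L.d a))

/-- The graded-symmetry relations defining the graded symmetric algebra of `L`. -/
inductive SymRel (L : DGLAOn k V) : TensorAlgebra k V → TensorAlgebra k V → Prop
  | rel {i j : ℤ} {a b : V} (ha : a ∈ L.gr i) (hb : b ∈ L.gr j) :
      SymRel L (TensorAlgebra.ι k a * TensorAlgebra.ι k b)
        (((-1 : k) ^ (i * j)) • (TensorAlgebra.ι k b * TensorAlgebra.ι k a))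

/-- The graded symmetric algebra `𝕊L` of a differential graded Lie algebra `L`. -/
abbrev SymAlg (L : DGLAOn k V) : Type u := RingQuot (SymRel L)

/-- The canonical map `L → 𝕊L`. -/
def sGen (L : DGLAOn k V) : V →ₗ[k] SymAlg L :=
  (RingQuot.mkAlgHom k (SymRel L)).toLinearMap ∘ₗ TensorAlgebra.ι k

/-- `R` is the differential graded Poisson algebra structure on `𝕊L` with differential
extending `d` and bracket extending the Lie bracket of `L` as a graded biderivation. -/
def IsSymDGPA (L : DGLAOn k V) (R : DGPAOn k (SymAlg L)) : Prop :=
  (∀ x y : SymAlg L, R.mul x y = x * y) ∧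
  R.one = 1 ∧
  (∀ {i : ℤ} {a : V}, a ∈ L.gr i → sGen L a ∈ R.gr i) ∧
  (∀ a : V, R.d (sGen L a) = sGen L (L.d a)) ∧
  (∀ a b : V, R.br (sGen L a) (sGen L b) = sGen L (L.br a b))

/-- `S` is the graded semidirect product differential graded Lie algebra `L ⋊ L`. -/
def IsSemidirect (L : DGLAOn k V) (S : DGLAOn k (V × V)) : Prop :=
  (∀ n : ℤ, S.gr n = (L.gr n).prod (L.gr n)) ∧
  (∀ z : V × V, S.d z = (L.d z.1, L.d z.2)) ∧
  (∀ {i j : ℤ} {x₁ x₂ y₁ y₂ : V}, x₁ ∈ L.gr i → x₂ ∈ L.gr i → y₁ ∈ L.gr j → y₂ ∈ L.gr j →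
    S.br (x₁, x₂) (y₁, y₂) =
      (L.br x₂ y₁ - ((-1 : k) ^ (i * j)) • L.br y₂ x₁, L.br x₂ y₂))

end Lie

section Smash

variable {M : Type u} [AddCommGroup M] [Module k M]

/-- The generators `1#(ab) - a#b - (-1)^{|a||b|} b#a` of the ideal defining `A^E`
inside the smash product `A # U(A)`. -/
def smashGens (P : DGPAOn k M) : Set (M ⊗[k] ULie P.toLie) :=
  {z | ∃ (i j : ℤ) (a b : M), a ∈ P.gr i ∧ b ∈ P.gr j ∧
    z = P.one ⊗ₜ[k] uGen P.toLie (P.mul a b) - a ⊗ₜ[k] uGen P.toLie b -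
        ((-1 : k) ^ (i * j)) • (b ⊗ₜ[k] uGen P.toLie a)}

/-- The two-sided ideal generated by a set `T` in a differential graded algebra `S`. -/
def idealGen {N : Type u} [AddCommGroup N] [Module k N] (S : DGAOn k N) (T : Set N) :
    Submodule k N :=
  sInf {I : Submodule k N | T ⊆ I ∧ ∀ x ∈ I, ∀ y : N, S.mul x y ∈ I ∧ S.mul y x ∈ I}

/-- `S` is the smash product differential graded algebra `A # U(A)`. -/
def IsSmash (P : DGPAOn k M) (EU : DGAOn k (ULie P.toLie))
    (S : DGAOn k (M ⊗[k] ULie P.toLie)) : Prop :=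
  S.one = P.one ⊗ₜ[k] (1 : ULie P.toLie) ∧
  (∀ a b : M, S.mul (a ⊗ₜ[k] (1 : ULie P.toLie)) (b ⊗ₜ[k] (1 : ULie P.toLie)) =
      P.mul a b ⊗ₜ[k] (1 : ULie P.toLie)) ∧
  (∀ u v : ULie P.toLie, S.mul (P.one ⊗ₜ[k] u) (P.one ⊗ₜ[k] v) = P.one ⊗ₜ[k] (u * v)) ∧
  (∀ (a : M) (u : ULie P.toLie), S.mul (a ⊗ₜ[k] (1 : ULie P.toLie)) (P.one ⊗ₜ[k] u) =
      a ⊗ₜ[k] u) ∧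
  (∀ {i j : ℤ} {c b : M}, c ∈ P.gr i → b ∈ P.gr j →
    S.mul (P.one ⊗ₜ[k] uGen P.toLie c) (b ⊗ₜ[k] (1 : ULie P.toLie)) =
      P.br c b ⊗ₜ[k] (1 : ULie P.toLie) + ((-1 : k) ^ (i * j)) • (b ⊗ₜ[k] uGen P.toLie c)) ∧
  (∀ {i j : ℤ} {a : M} {u : ULie P.toLie}, a ∈ P.gr i → u ∈ EU.gr j →
      a ⊗ₜ[k] u ∈ S.gr (i + j)) ∧
  (∀ {i : ℤ} {a : M}, a ∈ P.gr i → ∀ u : ULie P.toLie,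
    S.d (a ⊗ₜ[k] u) = P.d a ⊗ₜ[k] u + ((-1 : k) ^ i) • (a ⊗ₜ[k] EU.d u))

/-- `R` is the quotient differential graded algebra structure of `S` by the ideal `I`. -/
def IsQuotDGA {N : Type u} [AddCommGroup N] [Module k N] (S : DGAOn k N)
    (I : Submodule k N) (R : DGAOn k (N ⧸ I)) : Prop :=
  (∀ n : ℤ, R.gr n = Submodule.map I.mkQ (S.gr n)) ∧
  R.one = I.mkQ S.one ∧
  (∀ x y : N, R.mul (I.mkQ x) (I.mkQ y) = I.mkQ (S.mul x y)) ∧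
  (∀ x : N, R.d (I.mkQ x) = I.mkQ (S.d x))

end Smash

section Op

variable {M N : Type u} [AddCommGroup M] [Module k M] [AddCommGroup N] [Module k N]

/-- `P'` is the opposite differential graded Poisson algebra of `P` (the product is
unchanged by graded commutativity, the bracket is negated). -/
def IsOpDGPA (P P' : DGPAOn k M) : Prop :=
  P'.gr = P.gr ∧ (∀ x y : M, P'.mul x y = P.mul x y) ∧ P'.one = P.one ∧ P'.d = P.d ∧
  (∀ x y : M, P'.br x y = - P.br x y)

/-- `E'` is the opposite differential graded algebra of `E` (with the Koszul sign). -/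
def IsOpDGA (E E' : DGAOn k N) : Prop :=
  E'.gr = E.gr ∧ E'.one = E.one ∧ E'.d = E.d ∧
  (∀ {i j : ℤ} {x y : N}, x ∈ E.gr i → y ∈ E.gr j →
    E'.mul x y = ((-1 : k) ^ (i * j)) • E.mul y x)

end Op

section UEnv

variable {M N : Type u} [AddCommGroup M] [Module k M] [AddCommGroup N] [Module k N]

/-- A pair `(f, g)` where `f : A → D` is a differential graded algebra map and
`g : A → D_L` is a differential graded Lie algebra map (into the graded commutator Lie
structure of `D`), satisfying the two compatibility conditions of the universal property
of the universal enveloping algebra of a differential graded Poisson algebra. -/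
def UEPair (P : DGPAOn k M) (D : DGAOn k N) (f g : M →ₗ[k] N) : Prop :=
  (∀ {n : ℤ} {x : M}, x ∈ P.gr n → f x ∈ D.gr n) ∧
  (∀ {n : ℤ} {x : M}, x ∈ P.gr n → g x ∈ D.gr n) ∧
  (∀ a b : M, f (P.mul a b) = D.mul (f a) (f b)) ∧
  f P.one = D.one ∧
  (∀ a : M, f (P.d a) = D.d (f a)) ∧
  (∀ a : M, g (P.d a) = D.d (g a)) ∧
  (∀ {i j : ℤ} {a b : M}, a ∈ P.gr i → b ∈ P.gr j →
    g (P.br a b) = D.mul (g a) (g b) - ((-1 : k) ^ (i * j)) • D.mul (g b) (g a)) ∧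
  (∀ {i j : ℤ} {a b : M}, a ∈ P.gr i → b ∈ P.gr j →
    f (P.br a b) = D.mul (g a) (f b) - ((-1 : k) ^ (i * j)) • D.mul (f b) (g a)) ∧
  (∀ {i j : ℤ} {a b : M}, a ∈ P.gr i → b ∈ P.gr j →
    g (P.mul a b) = D.mul (f a) (g b) + ((-1 : k) ^ (i * j)) • D.mul (f b) (g a))

/-- `(E, α, β)` is a universal enveloping algebra of the differential graded Poisson
algebra `P`. -/
def IsUEnv (P : DGPAOn k M) (E : DGAOn k N) (α β : M →ₗ[k] N) : Prop :=
  UEPair P E α β ∧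
  ∀ (D' : Type u) [AddCommGroup D'] [Module k D'] (D : DGAOn k D') (f g : M →ₗ[k] D'),
    UEPair P D f g →
    ∃! φ : N →ₗ[k] D',
      IsDGAHom E D φ ∧ (∀ a : M, φ (α a) = f a) ∧ (∀ a : M, φ (β a) = g a)

end UEnv

section IdealsQuotients

variable {M : Type u} [AddCommGroup M] [Module k M]

/-- `B` is a differential graded Poisson ideal of `P`. -/
def IsDGPIdeal (P : DGPAOn k M) (B : Submodule k M) : Prop :=
  (B = ⨆ n : ℤ, B ⊓ P.gr n) ∧
  (∀ x ∈ B, P.d x ∈ B) ∧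
  (∀ x ∈ B, ∀ a : M, P.mul x a ∈ B) ∧
  (∀ x ∈ B, ∀ a : M, P.mul a x ∈ B) ∧
  (∀ x ∈ B, ∀ a : M, P.br a x ∈ B)

/-- `B` is a differential graded Poisson subalgebra of `P`. -/
def IsDGPSubalg (P : DGPAOn k M) (B : Submodule k M) : Prop :=
  (B = ⨆ n : ℤ, B ⊓ P.gr n) ∧ P.one ∈ B ∧
  (∀ x ∈ B, ∀ y ∈ B, P.mul x y ∈ B) ∧
  (∀ x ∈ B, P.d x ∈ B) ∧
  (∀ x ∈ B, ∀ y ∈ B, P.br x y ∈ B)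

/-- `R` is the quotient differential graded Poisson algebra structure on `M ⧸ B`. -/
def IsQuotDGPA (P : DGPAOn k M) (B : Submodule k M) (R : DGPAOn k (M ⧸ B)) : Prop :=
  (∀ n : ℤ, R.gr n = Submodule.map B.mkQ (P.gr n)) ∧
  R.one = B.mkQ P.one ∧
  (∀ x y : M, R.mul (B.mkQ x) (B.mkQ y) = B.mkQ (P.mul x y)) ∧
  (∀ x : M, R.d (B.mkQ x) = B.mkQ (P.d x)) ∧
  (∀ x y : M, R.br (B.mkQ x) (B.mkQ y) = B.mkQ (P.br x y))

/-- `S` is the differential graded Poisson algebra structure induced on a differential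
graded Poisson subalgebra `B` of `P`. -/
def IsSubDGPA (P : DGPAOn k M) (B : Submodule k M) (S : DGPAOn k B) : Prop :=
  (∀ n : ℤ, S.gr n = Submodule.comap B.subtype (P.gr n)) ∧
  ((S.one : M) = P.one) ∧
  (∀ x y : B, (S.mul x y : M) = P.mul (x : M) (y : M)) ∧
  (∀ x : B, (S.d x : M) = P.d (x : M)) ∧
  (∀ x y : B, (S.br x y : M) = P.br (x : M) (y : M))

/-- The cocycles `ker d` of a differential graded Poisson algebra. -/
def Cocycles (P : DGPAOn k M) : Submodule k M := LinearMap.ker P.d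

/-- The coboundaries `im d`, viewed inside the cocycles. -/
def CobIn (P : DGPAOn k M) : Submodule k (Cocycles P) :=
  Submodule.comap (Cocycles P).subtype (LinearMap.range P.d)

/-- The cohomology `H(A) = ker d / im d` of a differential graded Poisson algebra. -/
abbrev Cohom (P : DGPAOn k M) : Type u := Cocycles P ⧸ CobIn P

/-- The class map `ker d → H(A)`. -/
def cohCls (P : DGPAOn k M) : Cocycles P →ₗ[k] Cohom P := (CobIn P).mkQ

/-- `R` is the graded Poisson algebra structure on the cohomology of `P` (a differential
graded Poisson algebra structure with zero differential, with the induced grading,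
product and bracket). -/
def IsCohomDGPA (P : DGPAOn k M) (R : DGPAOn k (Cohom P)) : Prop :=
  R.d = 0 ∧
  (∀ n : ℤ, R.gr n =
    Submodule.map (cohCls P) (Submodule.comap (Cocycles P).subtype (P.gr n))) ∧
  (∀ h : P.one ∈ Cocycles P, R.one = cohCls P ⟨P.one, h⟩) ∧
  (∀ (a b : Cocycles P) (h : P.mul (a : M) (b : M) ∈ Cocycles P),
    R.mul (cohCls P a) (cohCls P b) = cohCls P ⟨P.mul (a : M) (b : M), h⟩) ∧
  (∀ (a b : Cocycles P) (h : P.br (a : M) (b : M) ∈ Cocycles P),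
    R.br (cohCls P a) (cohCls P b) = cohCls P ⟨P.br (a : M) (b : M), h⟩)

end IdealsQuotients

end Defs

section ModuleDefs

variable {k : Type u} [Field k]

/-- A left differential graded module structure on `X` over the differential graded
algebra `E`. -/
structure DGModOn {N : Type u} [AddCommGroup N] [Module k N] (E : DGAOn k N)
    (X : Type u) [AddCommGroup X] [Module k X] where
  grm : ℤ → Submodule k X
  decomp : DirectSum.Decomposition grm
  act : N →ₗ[k] X →ₗ[k] X
  act_one : ∀ x : X, act E.one x = x
  act_mul : ∀ (r s : N) (x : X), act (E.mul r s) x = act r (act s x)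
  act_mem : ∀ {i j : ℤ} {r : N} {x : X}, r ∈ E.gr i → x ∈ grm j → act r x ∈ grm (i + j)
  dm : X →ₗ[k] X
  dm_mem : ∀ {i : ℤ} {x : X}, x ∈ grm i → dm x ∈ grm (i + 1)
  dm_sq : ∀ x : X, dm (dm x) = 0
  dm_act : ∀ {i : ℤ} {r : N}, r ∈ E.gr i → ∀ x : X,
    dm (act r x) = act (E.d r) x + ((-1 : k) ^ i) • act r (dm x)

/-- A left differential graded Poisson module structure on `X` over the differential
graded Poisson algebra `P`. -/
structure DGPModOn {M : Type u} [AddCommGroup M] [Module k M] (P : DGPAOn k M)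
    (X : Type u) [AddCommGroup X] [Module k X] where
  grm : ℤ → Submodule k X
  decomp : DirectSum.Decomposition grm
  act : M →ₗ[k] X →ₗ[k] X
  act_one : ∀ x : X, act P.one x = x
  act_mul : ∀ (a b : M) (x : X), act (P.mul a b) x = act a (act b x)
  act_mem : ∀ {i j : ℤ} {a : M} {x : X}, a ∈ P.gr i → x ∈ grm j → act a x ∈ grm (i + j)
  dm : X →ₗ[k] X
  dm_mem : ∀ {i : ℤ} {x : X}, x ∈ grm i → dm x ∈ grm (i + 1)
  dm_sq : ∀ x : X, dm (dm x) = 0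
  dm_act : ∀ {i : ℤ} {a : M}, a ∈ P.gr i → ∀ x : X,
    dm (act a x) = act (P.d a) x + ((-1 : k) ^ i) • act a (dm x)
  bact : M →ₗ[k] X →ₗ[k] X
  bact_mem : ∀ {i j : ℤ} {a : M} {x : X}, a ∈ P.gr i → x ∈ grm j → bact a x ∈ grm (i + j)
  bact_amod : ∀ {i j : ℤ} {a b : M}, a ∈ P.gr i → b ∈ P.gr j → ∀ x : X,
    bact a (act b x) = act (P.br a b) x + ((-1 : k) ^ (i * j)) • act b (bact a x)
  bact_mulact : ∀ {i j : ℤ} {a b : M}, a ∈ P.gr i → b ∈ P.gr j → ∀ x : X,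
    bact (P.mul a b) x = act a (bact b x) + ((-1 : k) ^ (i * j)) • act b (bact a x)
  bact_jacobi : ∀ {i j : ℤ} {a b : M}, a ∈ P.gr i → b ∈ P.gr j → ∀ x : X,
    bact a (bact b x) = bact (P.br a b) x + ((-1 : k) ^ (i * j)) • bact b (bact a x)
  dm_bact : ∀ {i : ℤ} {a : M}, a ∈ P.gr i → ∀ x : X,
    dm (bact a x) = bact (P.d a) x + ((-1 : k) ^ i) • bact a (dm x)

/-- A morphism of left differential graded modules. -/
def IsDGModHom {N X Y : Type u} [AddCommGroup N] [Module k N]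
    [AddCommGroup X] [Module k X] [AddCommGroup Y] [Module k Y]
    {E : DGAOn k N} (W : DGModOn E X) (W' : DGModOn E Y) (f : X →ₗ[k] Y) : Prop :=
  (∀ {n : ℤ} {x : X}, x ∈ W.grm n → f x ∈ W'.grm n) ∧
  (∀ x : X, f (W.dm x) = W'.dm (f x)) ∧
  (∀ (r : N) (x : X), f (W.act r x) = W'.act r (f x))

/-- A morphism of left differential graded Poisson modules. -/
def IsDGPModHom {M X Y : Type u} [AddCommGroup M] [Module k M]
    [AddCommGroup X] [Module k X] [AddCommGroup Y] [Module k Y]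
    {P : DGPAOn k M} (V : DGPModOn P X) (V' : DGPModOn P Y) (f : X →ₗ[k] Y) : Prop :=
  (∀ {n : ℤ} {x : X}, x ∈ V.grm n → f x ∈ V'.grm n) ∧
  (∀ x : X, f (V.dm x) = V'.dm (f x)) ∧
  (∀ (a : M) (x : X), f (V.act a x) = V'.act a (f x)) ∧
  (∀ (a : M) (x : X), f (V.bact a x) = V'.bact a (f x))

/-- The correspondence between a differential graded Poisson module structure over `P`
and a differential graded module structure over `A^e` on the same space. -/
def ModCorr {M X : Type u} [AddCommGroup M] [Module k M] [AddCommGroup X] [Module k X]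
    {P : DGPAOn k M} {E : DGAOn k (Env P)}
    (V : DGPModOn P X) (W : DGModOn E X) : Prop :=
  W.grm = V.grm ∧ W.dm = V.dm ∧
  (∀ (a : M) (x : X), W.act (mgen P a) x = V.act a x) ∧
  (∀ (a : M) (x : X), W.act (hgen P a) x = V.bact a x)

end ModuleDefs

section Helpers

variable {k : Type u} [Field k]

theorem sgn_add_self (n : ℤ) : ((-1 : k) ^ n) * ((-1 : k) ^ n) = 1 := by
  rw [← mul_zpow]; simp

theorem sgn_sq_smul {N : Type u} [AddCommGroup N] [Module k N] (n : ℤ) (x : N) :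
    ((-1 : k) ^ n) • ((-1 : k) ^ n) • x = x := by
  rw [smul_smul, sgn_add_self, one_smul]

/-- The sign `(-1)^(n(n-1)/2)`. -/
def tri (k : Type u) [Field k] (n : ℤ) : k := (-1 : k) ^ (n * (n - 1) / 2)

theorem tri_zero : tri k 0 = 1 := by simp [tri]

theorem tri_sq (n : ℤ) : tri k n * tri k n = 1 := sgn_add_self _

theorem tri_add (i j : ℤ) : tri k (i + j) * (tri k j * tri k i) = (-1 : k) ^ (i * j) := by
  have h : (i + j) * (i + j - 1) / 2 = i * (i - 1) / 2 + j * (j - 1) / 2 + i * j := by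
    obtain ⟨a, ha⟩ := Int.even_mul_pred_self i
    obtain ⟨b, hb⟩ := Int.even_mul_pred_self j
    have : (i + j) * (i + j - 1) = 2 * (a + b + i * j) := by linear_combination ha + hb
    rw [this, ha, hb]
    omega
  have h1 : (-1 : k) ≠ 0 := by simp
  have e1 := tri_sq (k := k) i
  have e2 := tri_sq (k := k) j
  have : tri k (i + j) = tri k i * tri k j * (-1 : k) ^ (i * j) := by
    unfold tri
    rw [h, zpow_add₀ h1, zpow_add₀ h1]
  rw [this]
  linear_combination ((-1 : k) ^ (i * j)) * (tri k j * tri k j) * e1 + ((-1 : k) ^ (i * j)) * e2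

theorem alg_neg {N : Type u} [AddCommGroup N] [Module k N] (n : ℤ) (x y : N) :
    -(x - ((-1 : k) ^ n) • y) = ((-1 : k) ^ n) • y - ((-1 : k) ^ n) • ((-1 : k) ^ n) • x := by
  rw [sgn_sq_smul, neg_sub]

theorem alg_sum {N : Type u} [AddCommGroup N] [Module k N] (n : ℤ) (x y z w : N)
    (h : x - ((-1 : k) ^ n) • y = -(((-1 : k) ^ n) • (z - ((-1 : k) ^ n) • w))) :
    w + ((-1 : k) ^ n) • y = ((-1 : k) ^ n) • z + ((-1 : k) ^ n) • ((-1 : k) ^ n) • x := by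
  rw [smul_sub, sgn_sq_smul, sub_eq_iff_eq_add] at h
  rw [sgn_sq_smul, h]
  abel

section Graded

variable {N : Type u} [AddCommGroup N] [Module k N]

theorem gr_ind {gr : ℤ → Submodule k N} (dec : DirectSum.Decomposition gr) {p : N → Prop}
    (h0 : p 0) (hadd : ∀ x y, p x → p y → p (x + y))
    (hh : ∀ (i : ℤ) (x : N), x ∈ gr i → p x) (x : N) : p x := by
  let _ := dec
  exact DirectSum.Decomposition.inductionOn gr h0 (fun m => hh _ _ m.2) hadd x

theorem gr_le_of_iSup {gr : ℤ → Submodule k N} (dec : DirectSum.Decomposition gr)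
    (G : ℤ → Submodule k N) (hG : ∀ n, G n ≤ gr n) (ht : ∀ x, x ∈ ⨆ n, G n) (n : ℤ) :
    gr n ≤ G n := by
  let _ := dec
  have key : ∀ x : N, ∀ n, (DirectSum.decompose gr x n : N) ∈ G n := by
    intro x
    refine Submodule.iSup_induction G
      (motive := fun x => ∀ n, (DirectSum.decompose gr x n : N) ∈ G n) (ht x) ?_ ?_ ?_
    · intro i y hy n
      by_cases h : i = n
      · subst h
        rw [DirectSum.decompose_of_mem_same gr (hG _ hy)]
        exact hy
      · rw [DirectSum.decompose_of_mem_ne gr (hG _ hy) h]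
        exact zero_mem _
    · intro n
      simp
    · intro y z hy hz n
      rw [DirectSum.decompose_add]
      simpa using add_mem (hy n) (hz n)
  intro x hx
  have := key x n
  rwa [DirectSum.decompose_of_mem_same gr hx] at this

/-- The map multiplying the degree-`n` part by `(-1)^(n(n-1)/2)`. -/
theorem exists_sigma {gr : ℤ → Submodule k N} (dec : DirectSum.Decomposition gr) :
    ∃ s : N →ₗ[k] N, ∀ {n : ℤ} {x : N}, x ∈ gr n → s x = tri k n • x := by
  let _ := dec
  refine ⟨(DirectSum.toModule k ℤ N (fun n => tri k n • (gr n).subtype)) ∘ₗ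
    (DirectSum.decomposeLinearEquiv gr).toLinearMap, ?_⟩
  intro n x hx
  have := DirectSum.decomposeLinearEquiv_apply_coe (R := k) gr n ⟨x, hx⟩
  simp only at this
  rw [LinearMap.comp_apply, LinearEquiv.coe_coe, this, DirectSum.toModule_lof]
  rfl

theorem exists_op (E : DGAOn k N) : ∃ E' : DGAOn k N, IsOpDGA E E' := by
  obtain ⟨s, hs⟩ := exists_sigma E.decomp
  have ss : ∀ x, s (s x) = x := by
    intro x
    refine gr_ind E.decomp (p := fun x => s (s x) = x) (by simp) ?_ ?_ x
    · intro x y hx hy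
      rw [map_add, map_add, hx, hy]
    · intro i x hx
      rw [hs hx, map_smul, hs hx, smul_smul, tri_sq, one_smul]
  have s1 : s E.one = E.one := by rw [hs E.one_mem, tri_zero, one_smul]
  let m : N →ₗ[k] N →ₗ[k] N := LinearMap.mk₂ k (fun x y => s (E.mul (s y) (s x)))
    (by intros; simp) (by intros; simp) (by intros; simp) (by intros; simp)
  have hm : ∀ x y, m x y = s (E.mul (s y) (s x)) := fun x y => rfl
  have hh : ∀ {i j : ℤ} {x y : N}, x ∈ E.gr i → y ∈ E.gr j →
      m x y = ((-1 : k) ^ (i * j)) • E.mul y x := by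
    intro i j x y hx hy
    rw [hm, hs hx, hs hy]
    simp only [map_smul, LinearMap.smul_apply]
    rw [hs (E.mul_mem hy hx), smul_smul, smul_smul, ← tri_add i j, add_comm j i]
    congr 1
    ring
  refine ⟨{ gr := E.gr
            decomp := E.decomp
            mul := m
            one := E.one
            one_mem := E.one_mem
            mul_mem := ?_
            mul_assoc := ?_
            one_mul := ?_
            mul_one := ?_
            d := E.d
            d_mem := E.d_mem
            d_sq := E.d_sq
            d_mul := ?_ }, rfl, rfl, rfl, hh⟩
  · intro i j a b ha hb
    rw [hh ha hb, add_comm]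
    exact Submodule.smul_mem _ _ (E.mul_mem hb ha)
  · intro a b c
    simp only [hm, ss, E.mul_assoc]
  · intro a
    simp only [hm, s1, E.mul_one, ss]
  · intro a
    simp only [hm, s1, E.one_mul, ss]
  · intro i j a b ha hb
    rw [hh ha hb, hh (E.d_mem ha) hb, hh ha (E.d_mem hb), map_smul, E.d_mul hb ha]
    have h1 : (-1 : k) ≠ 0 := by simp
    rw [smul_add, smul_smul, smul_smul, add_comm, mul_add, add_mul, one_mul, mul_one,
      zpow_add₀ h1, zpow_add₀ h1]
    congr 2
    linear_combination (-(-1 : k) ^ (i * j)) * sgn_add_self (k := k) i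

theorem IsOpDGA.mul_op {E E' : DGAOn k N} (h : IsOpDGA E E')
    {i j : ℤ} {x y : N} (hx : x ∈ E.gr i) (hy : y ∈ E.gr j) :
    E.mul x y = ((-1 : k) ^ (i * j)) • E'.mul y x := by
  rw [h.2.2.2 hy hx, mul_comm j i, sgn_sq_smul]

theorem d_one (E : DGAOn k N) : E.d E.one = 0 := by
  have := E.d_mul E.one_mem E.one_mem
  rw [E.one_mul, E.mul_one, zpow_zero, one_smul, E.one_mul] at this
  simpa using this

/-- A multiplicative graded map is also multiplicative for the opposite products. -/
theorem hom_op {N' : Type u} [AddCommGroup N'] [Module k N'] {E Eop : DGAOn k N}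
    {F Fop : DGAOn k N'} (hE : IsOpDGA E Eop) (hF : IsOpDGA F Fop) (f : N' →ₗ[k] N)
    (hf : IsDGAHom F Eop f) (x y : N') : f (Fop.mul x y) = E.mul (f x) (f y) := by
  obtain ⟨hg, hmul, -, -⟩ := hf
  refine gr_ind F.decomp (p := fun x => f (Fop.mul x y) = E.mul (f x) (f y)) (by simp) ?_ ?_ x
  · intro x x' h h'
    simp only [map_add, LinearMap.add_apply] at h h' ⊢
    rw [h, h']
  · intro i x hx
    refine gr_ind F.decomp (p := fun y => f (Fop.mul x y) = E.mul (f x) (f y)) (by simp) ?_ ?_ y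
    · intro y y' h h'
      simp only [map_add] at h h' ⊢
      rw [h, h']
    · intro j y hy
      have hx' := hg hx
      have hy' := hg hy
      rw [hE.1] at hx' hy'
      rw [hF.2.2.2 hx hy, map_smul, hmul, hE.mul_op hx' hy']

end Graded

/-- The carrier of a differential graded algebra, as a ring. -/
def Car {N : Type u} [AddCommGroup N] [Module k N] (_D : DGAOn k N) : Type u := N

section CarInst

variable {N : Type u} [AddCommGroup N] [Module k N] (D : DGAOn k N)

instance : AddCommGroup (Car D) := inferInstanceAs (AddCommGroup N)

instance : Module k (Car D) := inferInstanceAs (Module k N)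

instance : Ring (Car D) :=
  { (inferInstance : AddCommGroup (Car D)) with
    mul := fun x y => D.mul x y
    one := D.one
    mul_assoc := D.mul_assoc
    one_mul := D.one_mul
    mul_one := D.mul_one
    left_distrib := fun x y z => (D.mul x).map_add y z
    right_distrib := fun x y z => D.mul.map_add₂ x y z
    zero_mul := fun x => D.mul.map_zero₂ x
    mul_zero := fun x => (D.mul x).map_zero }

instance : Algebra k (Car D) :=
  Algebra.ofModule (fun r x y => D.mul.map_smul₂ r x y) (fun r x y => (D.mul x).map_smul r y)

end CarInst

section EnvHelpers

variable {M : Type u} [AddCommGroup M] [Module k M] (P : DGPAOn k M)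

theorem env_ind (S : Submodule k (Env P)) (h1 : (1 : Env P) ∈ S)
    (hmul : ∀ x y, x ∈ S → y ∈ S → x * y ∈ S)
    (hm : ∀ a, mgen P a ∈ S) (hh : ∀ a, hgen P a ∈ S) (x : Env P) : x ∈ S := by
  obtain ⟨t, rfl⟩ := RingQuot.mkAlgHom_surjective k (EnvRel P) x
  induction t using TensorAlgebra.induction with
  | algebraMap r =>
    rw [AlgHom.commutes, Algebra.algebraMap_eq_smul_one]
    exact S.smul_mem _ h1
  | ι z =>
    obtain ⟨a, b⟩ := z
    have : ((a, b) : M × M) = (a, 0) + (0, b) := by simp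
    rw [this, map_add, map_add]
    exact S.add_mem (hm a) (hh b)
  | mul a b ha hb =>
    rw [map_mul]
    exact hmul _ _ ha hb
  | add a b ha hb =>
    rw [map_add]
    exact S.add_mem ha hb

theorem env_one : mgen P P.one = 1 :=
  (RingQuot.mkAlgHom_rel k (EnvRel.relone (P := P))).trans (map_one _)

theorem env_mul (a b : M) : mgen P (P.mul a b) = mgen P a * mgen P b :=
  (RingQuot.mkAlgHom_rel k (EnvRel.relmul (P := P) a b)).trans (map_mul _ _ _)

theorem env_hmul {i j : ℤ} {a b : M} (ha : a ∈ P.gr i) (hb : b ∈ P.gr j) :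
    hgen P (P.mul a b) =
      mgen P a * hgen P b + ((-1 : k) ^ (i * j)) • (mgen P b * hgen P a) := by
  refine (RingQuot.mkAlgHom_rel k (EnvRel.relhmul (P := P) ha hb)).trans ?_
  rw [map_add, map_smul, map_mul, map_mul]
  rfl

theorem env_mbr {i j : ℤ} {a b : M} (ha : a ∈ P.gr i) (hb : b ∈ P.gr j) :
    mgen P (P.br a b) =
      hgen P a * mgen P b - ((-1 : k) ^ (i * j)) • (mgen P b * hgen P a) := by
  refine (RingQuot.mkAlgHom_rel k (EnvRel.relmbr (P := P) ha hb)).trans ?_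
  rw [map_sub, map_smul, map_mul, map_mul]
  rfl

theorem env_hbr {i j : ℤ} {a b : M} (ha : a ∈ P.gr i) (hb : b ∈ P.gr j) :
    hgen P (P.br a b) =
      hgen P a * hgen P b - ((-1 : k) ^ (i * j)) • (hgen P b * hgen P a) := by
  refine (RingQuot.mkAlgHom_rel k (EnvRel.relhbr (P := P) ha hb)).trans ?_
  rw [map_sub, map_smul, map_mul, map_mul]
  rfl

/-- Uniqueness: a unital multiplicative endomorphism fixing the generators is the identity. -/
theorem env_id (f : Env P →ₗ[k] Env P) (h1 : f 1 = 1) (hmul : ∀ x y, f (x * y) = f x * f y)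
    (hm : ∀ a, f (mgen P a) = mgen P a) (hh : ∀ a, f (hgen P a) = hgen P a) (x : Env P) :
    f x = x := by
  have := env_ind P (LinearMap.eqLocus f LinearMap.id) (by simpa using h1)
    (by
      intro x y hx hy
      simp only [LinearMap.mem_eqLocus, LinearMap.id_apply] at hx hy ⊢
      rw [hmul, hx, hy])
    (fun a => by simpa using hm a) (fun a => by simpa using hh a) x
  simpa using this

/-- Existence: maps out of the enveloping algebra. -/
theorem env_lift {N : Type u} [AddCommGroup N] [Module k N] (D : DGAOn k N) (f g : M →ₗ[k] N)
    (hone : f P.one = D.one) (hmul : ∀ a b, f (P.mul a b) = D.mul (f a) (f b))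
    (hhmul : ∀ {i j : ℤ} {a b : M}, a ∈ P.gr i → b ∈ P.gr j →
      g (P.mul a b) = D.mul (f a) (g b) + ((-1 : k) ^ (i * j)) • D.mul (f b) (g a))
    (hmbr : ∀ {i j : ℤ} {a b : M}, a ∈ P.gr i → b ∈ P.gr j →
      f (P.br a b) = D.mul (g a) (f b) - ((-1 : k) ^ (i * j)) • D.mul (f b) (g a))
    (hhbr : ∀ {i j : ℤ} {a b : M}, a ∈ P.gr i → b ∈ P.gr j →
      g (P.br a b) = D.mul (g a) (g b) - ((-1 : k) ^ (i * j)) • D.mul (g b) (g a)) :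
    ∃ φ : Env P →ₗ[k] N, φ 1 = D.one ∧ (∀ x y, φ (x * y) = D.mul (φ x) (φ y)) ∧
      (∀ a, φ (mgen P a) = f a) ∧ (∀ a, φ (hgen P a) = g a) := by
  let L : (M × M) →ₗ[k] Car D := LinearMap.coprod (M₃ := Car D) f g
  let F : TensorAlgebra k (M × M) →ₐ[k] Car D := TensorAlgebra.lift k L
  have hFm : ∀ a : M, F (TensorAlgebra.ι k ((a, 0) : M × M)) = (f a : N) := by
    intro a
    refine (TensorAlgebra.lift_ι_apply L _).trans ?_
    show f a + g 0 = f a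
    simp
  have hFh : ∀ a : M, F (TensorAlgebra.ι k ((0, a) : M × M)) = (g a : N) := by
    intro a
    refine (TensorAlgebra.lift_ι_apply L _).trans ?_
    show f 0 + g a = g a
    simp
  have hF : ∀ ⦃x y⦄, EnvRel P x y → F x = F y := by
    intro x y h
    cases h with
    | relone => rw [hFm, map_one]; exact hone
    | relmul a b => rw [map_mul, hFm, hFm, hFm]; exact hmul a b
    | relhmul ha hb => rw [map_add, map_smul, map_mul, map_mul, hFm, hFm, hFh, hFh, hFh]; exact hhmul ha hb
    | relmbr ha hb => rw [map_sub, map_smul, map_mul, map_mul, hFm, hFm, hFh]; exact hmbr ha hb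
    | relhbr ha hb => rw [map_sub, map_smul, map_mul, map_mul, hFh, hFh, hFh]; exact hhbr ha hb
  let Φ : Env P →ₐ[k] Car D := RingQuot.liftAlgHom k ⟨F, hF⟩
  refine ⟨(Φ.toLinearMap : Env P →ₗ[k] Car D), map_one Φ, fun x y => map_mul Φ x y, ?_, ?_⟩
  · intro a
    exact (RingQuot.liftAlgHom_mkAlgHom_apply k F hF _).trans (hFm a)
  · intro a
    exact (RingQuot.liftAlgHom_mkAlgHom_apply k F hF _).trans (hFh a)

/-- A unital multiplicative map which is compatible with degree and differential on
generators is a morphism of differential graded algebras. -/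
theorem env_isDGAHom {N : Type u} [AddCommGroup N] [Module k N] (E : DGAOn k (Env P))
    (hE : IsEnvDGA P E) (D : DGAOn k N) (φ : Env P →ₗ[k] N)
    (h1 : φ 1 = D.one) (hmul : ∀ x y, φ (x * y) = D.mul (φ x) (φ y))
    (hmg : ∀ {i : ℤ} {a : M}, a ∈ P.gr i → φ (mgen P a) ∈ D.gr i)
    (hhg : ∀ {i : ℤ} {a : M}, a ∈ P.gr i → φ (hgen P a) ∈ D.gr i)
    (hmd : ∀ a, φ (mgen P (P.d a)) = D.d (φ (mgen P a)))
    (hhd : ∀ a, φ (hgen P (P.d a)) = D.d (φ (hgen P a))) : IsDGAHom E D φ := by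
  obtain ⟨Emul, Eone, Em, Eh, Edm, Edh⟩ := hE
  let G : ℤ → Submodule k (Env P) := fun n =>
    E.gr n ⊓ (D.gr n).comap φ ⊓ LinearMap.eqLocus (φ ∘ₗ E.d) (D.d ∘ₗ φ)
  have memG : ∀ n x, x ∈ G n ↔ (x ∈ E.gr n ∧ φ x ∈ D.gr n) ∧ φ (E.d x) = D.d (φ x) :=
    fun n x => Iff.rfl
  have Gmul : ∀ i j x y, x ∈ G i → y ∈ G j → x * y ∈ G (i + j) := by
    intro i j x y hx hy
    rw [memG] at hx hy ⊢
    obtain ⟨⟨hx1, hx2⟩, hx3⟩ := hx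
    obtain ⟨⟨hy1, hy2⟩, hy3⟩ := hy
    refine ⟨⟨?_, ?_⟩, ?_⟩
    · rw [← Emul]; exact E.mul_mem hx1 hy1
    · rw [hmul]; exact D.mul_mem hx2 hy2
    · rw [hmul, D.d_mul hx2 hy2, ← Emul, E.d_mul hx1 hy1, Emul, Emul, map_add, map_smul,
        hmul, hmul, hx3, hy3]
  have top : ∀ x, x ∈ ⨆ n, G n := by
    refine env_ind P _ ?_ ?_ ?_ ?_
    · refine Submodule.mem_iSup_of_mem 0 ?_
      rw [memG, h1, d_one, ← Eone, d_one]
      exact ⟨⟨E.one_mem, D.one_mem⟩, map_zero _⟩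
    · intro x y hx hy
      refine Submodule.iSup_induction G (motive := fun x => x * y ∈ ⨆ n, G n) hx ?_ ?_ ?_
      · intro i x hx
        refine Submodule.iSup_induction G (motive := fun y => x * y ∈ ⨆ n, G n) hy ?_ ?_ ?_
        · intro j y hy
          exact Submodule.mem_iSup_of_mem (i + j) (Gmul i j x y hx hy)
        · rw [mul_zero]; exact zero_mem _
        · intro y z hy hz
          rw [mul_add]; exact add_mem hy hz
      · rw [zero_mul]; exact zero_mem _
      · intro x z hx hz
        rw [add_mul]; exact add_mem hx hz
    · intro a
      refine gr_ind P.decomp (p := fun a => mgen P a ∈ ⨆ n, G n) ?_ ?_ ?_ a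
      · rw [map_zero]; exact zero_mem _
      · intro x y hx hy
        rw [map_add]; exact add_mem hx hy
      · intro i x hx
        refine Submodule.mem_iSup_of_mem i ?_
        rw [memG, Edm]
        exact ⟨⟨Em hx, hmg hx⟩, hmd x⟩
    · intro a
      refine gr_ind P.decomp (p := fun a => hgen P a ∈ ⨆ n, G n) ?_ ?_ ?_ a
      · rw [map_zero]; exact zero_mem _
      · intro x y hx hy
        rw [map_add]; exact add_mem hx hy
      · intro i x hx
        refine Submodule.mem_iSup_of_mem i ?_
        rw [memG, Edh]
        exact ⟨⟨Eh hx, hhg hx⟩, hhd x⟩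
  have hle := gr_le_of_iSup E.decomp G (fun n x hx => hx.1.1) top
  refine ⟨fun {n x} hx => ((memG n x).1 (hle n hx)).1.2, ?_, ?_, ?_⟩
  · intro x y
    rw [Emul, hmul]
  · rw [Eone, h1]
  · intro x
    refine Submodule.iSup_induction G (motive := fun x => φ (E.d x) = D.d (φ x)) (top x) ?_ ?_ ?_
    · intro i x hx
      exact hx.2
    · simp
    · intro x y hx hy
      simp only [map_add, hx, hy]

theorem IsOpDGPA.symm {P P' : DGPAOn k M} (h : IsOpDGPA P P') : IsOpDGPA P' P := by
  obtain ⟨h1, h2, h3, h4, h5⟩ := h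
  exact ⟨h1.symm, fun x y => (h2 x y).symm, h3.symm, h4.symm, fun x y => by rw [h5, neg_neg]⟩

/-- The comparison map `(A^{op})^e → (A^e)^{op}`. -/
theorem half (P P' : DGPAOn k M) (hop : IsOpDGPA P P')
    (E : DGAOn k (Env P)) (hE : IsEnvDGA P E)
    (E' : DGAOn k (Env P')) (hE' : IsEnvDGA P' E')
    (Eop : DGAOn k (Env P)) (hEop : IsOpDGA E Eop) :
    ∃ φ : Env P' →ₗ[k] Env P, IsDGAHom E' Eop φ ∧
      (∀ a : M, φ (mgen P' a) = mgen P a) ∧ (∀ a : M, φ (hgen P' a) = hgen P a) := by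
  obtain ⟨pgr, pmul, pone, pd, pbr⟩ := hop
  obtain ⟨ogr, oone, od, omul⟩ := hEop
  have hE0 := hE
  obtain ⟨Emul, Eone, Em, Eh, Edm, Edh⟩ := hE0
  have mm : ∀ {i j : ℤ} {a b : M}, a ∈ P.gr i → b ∈ P.gr j →
      Eop.mul (mgen P a) (mgen P b) = ((-1 : k) ^ (i * j)) • (mgen P b * mgen P a) :=
    fun ha hb => by rw [omul (Em ha) (Em hb), Emul]
  have mh : ∀ {i j : ℤ} {a b : M}, a ∈ P.gr i → b ∈ P.gr j →
      Eop.mul (mgen P a) (hgen P b) = ((-1 : k) ^ (i * j)) • (hgen P b * mgen P a) :=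
    fun ha hb => by rw [omul (Em ha) (Eh hb), Emul]
  have hm : ∀ {i j : ℤ} {a b : M}, a ∈ P.gr i → b ∈ P.gr j →
      Eop.mul (hgen P a) (mgen P b) = ((-1 : k) ^ (i * j)) • (mgen P b * hgen P a) :=
    fun ha hb => by rw [omul (Eh ha) (Em hb), Emul]
  have hh : ∀ {i j : ℤ} {a b : M}, a ∈ P.gr i → b ∈ P.gr j →
      Eop.mul (hgen P a) (hgen P b) = ((-1 : k) ^ (i * j)) • (hgen P b * hgen P a) :=
    fun ha hb => by rw [omul (Eh ha) (Eh hb), Emul]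
  obtain ⟨φ, f1, f2, f3, f4⟩ := env_lift P' Eop (mgen P) (hgen P)
    (by rw [pone, oone, Eone, env_one])
    (by
      intro a b
      rw [pmul]
      refine gr_ind P.decomp
        (p := fun a => mgen P (P.mul a b) = Eop.mul (mgen P a) (mgen P b)) (by simp) ?_ ?_ a
      · intro x y hx hy
        simp only [map_add, LinearMap.add_apply] at hx hy ⊢
        rw [hx, hy]
      · intro i x hx
        refine gr_ind P.decomp
          (p := fun b => mgen P (P.mul x b) = Eop.mul (mgen P x) (mgen P b)) (by simp) ?_ ?_ b
        · intro y z hy hz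
          simp only [map_add] at hy hz ⊢
          rw [hy, hz]
        · intro j y hy
          rw [mm hx hy, P.mul_comm hx hy, map_smul, env_mul])
    (by
      intro i j a b ha hb
      rw [pgr] at ha hb
      rw [pmul, mh ha hb, mh hb ha, mul_comm j i, env_hmul P ha hb]
      have e1 := env_mbr P ha hb
      have e2 := env_mbr P hb ha
      rw [mul_comm j i] at e2
      have e3 : mgen P (P.br a b) = -(((-1 : k) ^ (i * j)) • mgen P (P.br b a)) := by
        rw [P.br_antisymm ha hb, map_neg, map_smul]
      rw [e1, e2] at e3
      exact alg_sum (k := k) (N := Env P) (i * j) _ _ _ _ e3)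
    (by
      intro i j a b ha hb
      rw [pgr] at ha hb
      rw [pbr, map_neg, hm ha hb, mh hb ha, mul_comm j i, env_mbr P ha hb]
      exact alg_neg (k := k) (N := Env P) (i * j) _ _)
    (by
      intro i j a b ha hb
      rw [pgr] at ha hb
      rw [pbr, map_neg, hh ha hb, hh hb ha, mul_comm j i, env_hbr P ha hb]
      exact alg_neg (k := k) (N := Env P) (i * j) _ _)
  refine ⟨φ, ?_, f3, f4⟩
  refine env_isDGAHom P' E' hE' Eop φ f1 f2 ?_ ?_ ?_ ?_
  · intro i a ha
    rw [pgr] at ha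
    rw [f3, ogr]
    exact Em ha
  · intro i a ha
    rw [pgr] at ha
    rw [f4, ogr]
    exact Eh ha
  · intro a
    rw [f3, f3, od, pd, Edm]
  · intro a
    rw [f4, f4, od, pd, Edh]

end EnvHelpers

end Helpers

/-- `(A^{op})^e ≅ (A^e)^{op}` as differential graded algebras, via the map
sending the generators `m_a, h_a` of `(A^{op})^e` to the corresponding generators of
`(A^e)^{op}`. -/
theorem stmt_17 (k : Type u) [Field k] (M : Type u) [AddCommGroup M] [Module k M]
    (P P' : DGPAOn k M) (hop : IsOpDGPA P P')
    (E : DGAOn k (Env P)) (hE : IsEnvDGA P E)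
    (E' : DGAOn k (Env P')) (hE' : IsEnvDGA P' E')
    (Eop : DGAOn k (Env P)) (hEop : IsOpDGA E Eop) :
    ∃ φ : Env P' →ₗ[k] Env P,
      IsDGAHom E' Eop φ ∧ Function.Bijective φ ∧
      (∀ a : M, φ (mgen P' a) = mgen P a) ∧ (∀ a : M, φ (hgen P' a) = hgen P a) := by
  obtain ⟨E'op, hE'op⟩ := exists_op E'
  obtain ⟨φ, hφ, φm, φh⟩ := half P P' hop E hE E' hE' Eop hEop
  obtain ⟨ψ, hψ, ψm, ψh⟩ := half P' P hop.symm E' hE' E hE E'op hE'op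
  have φop := hom_op hEop hE'op φ hφ
  have ψop := hom_op hE'op hEop ψ hψ
  have φ1 : φ 1 = 1 := by rw [← hE'.2.1, hφ.2.2.1, hEop.2.1, hE.2.1]
  have ψ1 : ψ 1 = 1 := by rw [← hE.2.1, hψ.2.2.1, hE'op.2.1, hE'.2.1]
  refine ⟨φ, hφ, Function.bijective_iff_has_inverse.2 ⟨ψ, ?_, ?_⟩, φm, φh⟩
  · refine env_id P' (ψ ∘ₗ φ) ?_ ?_ ?_ ?_
    · rw [LinearMap.comp_apply, φ1, ψ1]
    · intro x y
      simp only [LinearMap.comp_apply]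
      rw [← hE'.1, hφ.2.1, ψop, hE'.1]
    · intro a
      rw [LinearMap.comp_apply, φm, ψm]
    · intro a
      rw [LinearMap.comp_apply, φh, ψh]
  · refine env_id P (φ ∘ₗ ψ) ?_ ?_ ?_ ?_
    · rw [LinearMap.comp_apply, ψ1, φ1]
    · intro x y
      simp only [LinearMap.comp_apply]
      rw [← hE.1, hψ.2.1, φop, hE.1]
    · intro a
      rw [LinearMap.comp_apply, ψm, φm]
    · intro a
      rw [LinearMap.comp_apply, ψh, φh]

end DGPaper

end
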